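/- Let S be the homomorphism of the Fibonacci language L_F with S(0) = 3 and S(1) = 2, and let Φ = (1+√5)/2. Then the complement of S(L_F) in the positive integers is ℕ \ S(L_F) = {2⌊nΦ⌋ + n + 1 : n ≥ 0} = {1, 4, 9, 12, ...}. -/

import Mathlib

/-!
The words `0c` and `1c` are the lower and upper mechanical words of slope `2 - φ`, so a factor of
length `L` contains `⌊L(2 - φ)⌋` or `⌈L(2 - φ)⌉` ones, and both counts occur. Hence `S` takes
exactly the values `b(L)` and `b(L) + 1` with `L ≥ 1`, where `b(L) = ⌊Lφ²⌋` is the upper Wythoff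
sequence. By Rayleigh's theorem the positive integers outside `b` are the values of the lower
Wythoff sequence `a(k) = ⌊kφ⌋`, so `n` is missed exactly when `n - 1 = a(m)` and `n = a(m + 1)` for
some `m ≥ 0`. The gap `a(m + 1) - a(m)` is `2` when `m = a(k)` with `k ≥ 1` and `1` when
`m = b(k)`, and in the latter case `n - 1 = a(b(k)) = a(k) + b(k) = 2⌊kφ⌋ + k`.
-/

/-- `w` is a nonempty finite factor of the infinite word `f`. -/
def IsFactor {A : Type*} (f : ℕ → A) (w : List A) : Prop :=
  w ≠ [] ∧ ∃ i : ℕ, w = (List.range w.length).map fun j => f (i + j)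

/-- The golden mean `Φ = (1+√5)/2`. -/
noncomputable def Phi : ℝ := (1 + Real.sqrt 5) / 2

/-- The Fibonacci word `c(n) = ⌊(n+2)α⌋ − ⌊(n+1)α⌋` with `α = 2 − Φ`. -/
noncomputable def fibWord (n : ℕ) : ℤ :=
  ⌊((n : ℝ) + 2) * (2 - Phi)⌋ - ⌊((n : ℝ) + 1) * (2 - Phi)⌋

/-- The infinite word `0c`: the Fibonacci word prefixed by `0`. -/
noncomputable def fibWord0 (n : ℕ) : ℤ :=
  if n = 0 then 0 else fibWord (n - 1)

/-- The infinite word `1c`: the Fibonacci word prefixed by `1`. -/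
noncomputable def fibWord1 (n : ℕ) : ℤ :=
  if n = 0 then 1 else fibWord (n - 1)

/-- The Fibonacci language: nonempty finite factors of `0c` or of `1c`. -/
def fibLang : Set (List ℤ) :=
  {w | IsFactor fibWord0 w ∨ IsFactor fibWord1 w}

/-- The homomorphism determined by `S0 = S(0)`, `S1 = S(1)`:
`S(w) = N_0(w)·S0 + N_1(w)·S1`. -/
def wordVal01 (S0 S1 : ℕ) (w : List ℤ) : ℕ :=
  w.count 0 * S0 + w.count 1 * S1

open scoped goldenRatio

/-! ### Mechanical words -/

section Floor

variable {R : Type*} [Ring R] [LinearOrder R] [IsStrictOrderedRing R] [FloorRing R]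

theorem floor_add_sub_floor_eq_floor_or_ceil (x y : R) :
    ⌊x + y⌋ - ⌊x⌋ = ⌊y⌋ ∨ ⌊x + y⌋ - ⌊x⌋ = ⌈y⌉ := by
  have lower : ⌊x⌋ + ⌊y⌋ ≤ ⌊x + y⌋ := Int.le_floor_add x y
  have upper : ⌊x + y⌋ ≤ ⌊x⌋ + ⌈y⌉ := by
    rw [← Int.floor_add_intCast]
    gcongr
    exact Int.le_ceil y
  have := Int.ceil_le_floor_add_one y
  omega

theorem ceil_add_sub_ceil_eq_floor_or_ceil (x y : R) :
    ⌈x + y⌉ - ⌈x⌉ = ⌊y⌋ ∨ ⌈x + y⌉ - ⌈x⌉ = ⌈y⌉ := by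
  have h := floor_add_sub_floor_eq_floor_or_ceil (-x) (-y)
  rw [← neg_add, Int.floor_neg, Int.floor_neg, Int.floor_neg, Int.ceil_neg] at h
  omega

theorem floor_eq_zero_or_one {x : R} (hx : x ∈ Set.Icc 0 1) : ⌊x⌋ = 0 ∨ ⌊x⌋ = 1 := by
  have : 0 ≤ ⌊x⌋ := Int.floor_nonneg.2 hx.1
  have : ⌊x⌋ ≤ 1 := by simpa using Int.floor_mono hx.2
  omega

theorem ceil_eq_zero_or_one {x : R} (hx : x ∈ Set.Icc 0 1) : ⌈x⌉ = 0 ∨ ⌈x⌉ = 1 := by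
  have : 0 ≤ ⌈x⌉ := Int.ceil_nonneg hx.1
  have : ⌈x⌉ ≤ 1 := by simpa using Int.ceil_mono hx.2
  omega

theorem mul_fract_mem_Ico {c : R} (hc : 0 < c) (x : R) : c * Int.fract x ∈ Set.Ico 0 c :=
  ⟨mul_nonneg hc.le (Int.fract_nonneg x), mul_lt_of_lt_one_right hc (Int.fract_lt_one x)⟩

end Floor

theorem sum_map_range_sub {G : Type*} [AddCommGroup G] (F : ℕ → G) (i L : ℕ) :
    ((List.range L).map fun j => F (i + j + 1) - F (i + j)).sum = F (i + L) - F i := by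
  induction L with
  | zero => simp
  | succ L ih => simp [List.range_succ, ih, ← add_assoc]

theorem IsFactor.exists_eq_of_mem {A : Type*} {f : ℕ → A} {w : List A} (hw : IsFactor f w) {x : A}
    (hx : x ∈ w) : ∃ n, f n = x := by
  obtain ⟨-, i, hi⟩ := hw
  rw [hi] at hx
  obtain ⟨j, -, hj⟩ := List.mem_map.1 hx
  exact ⟨i + j, hj⟩

theorem isFactor_map_range {A : Type*} (f : ℕ → A) {L : ℕ} (hL : 0 < L) :
    IsFactor f ((List.range L).map f) :=
  ⟨by simpa using hL.ne', 0, by simp⟩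

theorem wordVal01_eq_length_sum (S0 S1 : ℕ) {w : List ℤ} (hw : ∀ x ∈ w, x = 0 ∨ x = 1) :
    (wordVal01 S0 S1 w : ℤ) = S0 * w.length + (S1 - S0) * w.sum := by
  induction w with
  | nil => simp [wordVal01]
  | cons x w ih =>
    have ih := ih fun y hy => hw y (List.mem_cons_of_mem x hy)
    simp only [wordVal01, Nat.cast_add, Nat.cast_mul] at ih
    rcases hw x List.mem_cons_self with rfl | rfl <;>
      simp only [wordVal01, List.count_cons_self, List.count_cons_of_ne one_ne_zero,
        List.count_cons_of_ne zero_ne_one, List.length_cons, List.sum_cons, Nat.cast_add,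
        Nat.cast_mul, Nat.cast_one] <;>
      linear_combination ih

/-- The lower mechanical word of slope `α` and intercept `0`. -/
noncomputable def lowerMechanical (α : ℝ) (n : ℕ) : ℤ :=
  ⌊((n + 1 : ℕ) : ℝ) * α⌋ - ⌊(n : ℝ) * α⌋

/-- The upper mechanical word of slope `α` and intercept `0`. -/
noncomputable def upperMechanical (α : ℝ) (n : ℕ) : ℤ :=
  ⌈((n + 1 : ℕ) : ℝ) * α⌉ - ⌈(n : ℝ) * α⌉

/-- The language of slope `α`: the nonempty finite factors of the two mechanical words of slope `α`
and intercept `0`. For irrational `α` in `(0, 1)` it is the Sturmian language of that slope. -/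
def mechanicalLang (α : ℝ) : Set (List ℤ) :=
  {w | IsFactor (lowerMechanical α) w ∨ IsFactor (upperMechanical α) w}

section Mechanical

variable {α : ℝ}

theorem ceil_natCast_mul_eq_floor_add_one (hα : Irrational α) {k : ℕ} (hk : k ≠ 0) :
    ⌈k * α⌉ = ⌊k * α⌋ + 1 := by
  rw [Int.ceil_eq_floor_add_one_iff_notMem]
  rintro ⟨m, hm⟩
  exact (hα.natCast_mul hk).ne_int m hm.symm

theorem upperMechanical_eq_lowerMechanical (hα : Irrational α) {n : ℕ} (hn : n ≠ 0) :
    upperMechanical α n = lowerMechanical α n := by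
  rw [upperMechanical, lowerMechanical, ceil_natCast_mul_eq_floor_add_one hα hn,
    ceil_natCast_mul_eq_floor_add_one hα n.succ_ne_zero, add_sub_add_right_eq_sub]

theorem lowerMechanical_eq_zero_or_one (hα : α ∈ Set.Icc 0 1) (n : ℕ) :
    lowerMechanical α n = 0 ∨ lowerMechanical α n = 1 := by
  have h := floor_add_sub_floor_eq_floor_or_ceil (n * α) α
  rw [← add_one_mul, ← Nat.cast_add_one] at h
  rcases h with h | h <;> rw [lowerMechanical, h]
  exacts [floor_eq_zero_or_one hα, ceil_eq_zero_or_one hα]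

theorem upperMechanical_eq_zero_or_one (hα : α ∈ Set.Icc 0 1) (n : ℕ) :
    upperMechanical α n = 0 ∨ upperMechanical α n = 1 := by
  have h := ceil_add_sub_ceil_eq_floor_or_ceil (n * α) α
  rw [← add_one_mul, ← Nat.cast_add_one] at h
  rcases h with h | h <;> rw [upperMechanical, h]
  exacts [floor_eq_zero_or_one hα, ceil_eq_zero_or_one hα]

theorem eq_zero_or_one_of_mem_mechanicalLang (hα : α ∈ Set.Icc 0 1) {w : List ℤ}
    (hw : w ∈ mechanicalLang α) : ∀ x ∈ w, x = 0 ∨ x = 1 := by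
  intro x hx
  rcases hw with hw | hw <;> obtain ⟨n, rfl⟩ := hw.exists_eq_of_mem hx
  exacts [lowerMechanical_eq_zero_or_one hα n, upperMechanical_eq_zero_or_one hα n]

theorem sum_lowerMechanical (α : ℝ) (i L : ℕ) :
    ((List.range L).map fun j => lowerMechanical α (i + j)).sum =
      ⌊((i + L : ℕ) : ℝ) * α⌋ - ⌊(i : ℝ) * α⌋ :=
  sum_map_range_sub (fun n : ℕ => ⌊(n : ℝ) * α⌋) i L

theorem sum_upperMechanical (α : ℝ) (i L : ℕ) :
    ((List.range L).map fun j => upperMechanical α (i + j)).sum =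
      ⌈((i + L : ℕ) : ℝ) * α⌉ - ⌈(i : ℝ) * α⌉ :=
  sum_map_range_sub (fun n : ℕ => ⌈(n : ℝ) * α⌉) i L

theorem sum_eq_floor_or_ceil_of_mem_mechanicalLang {w : List ℤ} (hw : w ∈ mechanicalLang α) :
    w.sum = ⌊w.length * α⌋ ∨ w.sum = ⌈w.length * α⌉ := by
  rcases hw with ⟨-, i, hi⟩ | ⟨-, i, hi⟩
  · have hsum := sum_lowerMechanical α i w.length
    rw [← hi, Nat.cast_add, add_mul] at hsum
    rw [hsum]
    exact floor_add_sub_floor_eq_floor_or_ceil _ _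
  · have hsum := sum_upperMechanical α i w.length
    rw [← hi, Nat.cast_add, add_mul] at hsum
    rw [hsum]
    exact ceil_add_sub_ceil_eq_floor_or_ceil _ _

theorem exists_mem_mechanicalLang_length_sum_iff {L : ℕ} {s : ℤ} :
    (∃ w ∈ mechanicalLang α, w.length = L ∧ w.sum = s) ↔
      0 < L ∧ (s = ⌊L * α⌋ ∨ s = ⌈L * α⌉) := by
  constructor
  · rintro ⟨w, hw, rfl, rfl⟩
    have hne : w ≠ [] := hw.elim And.left And.left
    exact ⟨List.length_pos_iff.2 hne, sum_eq_floor_or_ceil_of_mem_mechanicalLang hw⟩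
  · rintro ⟨hL, rfl | rfl⟩
    · exact ⟨_, .inl (isFactor_map_range _ hL), by simp,
        by simpa using sum_lowerMechanical α 0 L⟩
    · exact ⟨_, .inr (isFactor_map_range _ hL), by simp,
        by simpa using sum_upperMechanical α 0 L⟩

theorem exists_mem_mechanicalLang_wordVal01_eq_iff (hα : α ∈ Set.Icc 0 1) (S0 S1 n : ℕ) :
    (∃ w ∈ mechanicalLang α, wordVal01 S0 S1 w = n) ↔
      ∃ L : ℕ, 0 < L ∧ ((n : ℤ) = S0 * L + (S1 - S0) * ⌊L * α⌋ ∨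
        (n : ℤ) = S0 * L + (S1 - S0) * ⌈L * α⌉) := by
  constructor
  · rintro ⟨w, hw, rfl⟩
    obtain ⟨hL, hs⟩ := exists_mem_mechanicalLang_length_sum_iff.1 ⟨w, hw, rfl, rfl⟩
    rw [wordVal01_eq_length_sum S0 S1 (eq_zero_or_one_of_mem_mechanicalLang hα hw)]
    exact ⟨w.length, hL, hs.imp (fun h => by rw [h]) fun h => by rw [h]⟩
  · rintro ⟨L, hL, h⟩
    obtain ⟨s, hs, hn⟩ : ∃ s : ℤ, (s = ⌊L * α⌋ ∨ s = ⌈L * α⌉) ∧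
        (n : ℤ) = S0 * L + (S1 - S0) * s :=
      h.elim (fun h => ⟨_, .inl rfl, h⟩) (fun h => ⟨_, .inr rfl, h⟩)
    obtain ⟨w, hw, rfl, rfl⟩ := exists_mem_mechanicalLang_length_sum_iff.2 ⟨hL, hs⟩
    refine ⟨w, hw, ?_⟩
    rw [← Nat.cast_inj (R := ℤ), hn]
    exact wordVal01_eq_length_sum S0 S1 (eq_zero_or_one_of_mem_mechanicalLang hα hw)

end Mechanical

/-! ### The Wythoff sequences -/

/-- The lower Wythoff sequence `⌊kφ⌋`, indexed by all integers as Mathlib's `beattySeq`. -/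
noncomputable def lowerWythoff (k : ℤ) : ℤ := beattySeq φ k

/-- The upper Wythoff sequence `⌊kφ²⌋`, indexed by all integers as Mathlib's `beattySeq`. -/
noncomputable def upperWythoff (k : ℤ) : ℤ := beattySeq (φ ^ 2) k

theorem upperWythoff_eq (k : ℤ) : upperWythoff k = lowerWythoff k + k := by
  simp [upperWythoff, lowerWythoff, beattySeq, Real.goldenRatio_sq, mul_add]

theorem lowerWythoff_eq_iff {k m : ℤ} : lowerWythoff k = m ↔ (m : ℝ) ≤ k * φ ∧ k * φ < m + 1 :=
  Int.floor_eq_iff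

theorem lowerWythoff_le (k : ℤ) : (lowerWythoff k : ℝ) ≤ k * φ := Int.floor_le _

theorem lowerWythoff_lt {k : ℤ} (hk : k ≠ 0) : (lowerWythoff k : ℝ) < k * φ :=
  (lowerWythoff_le k).lt_of_ne (Real.goldenRatio_irrational.intCast_mul hk |>.ne_int _).symm

theorem lowerWythoff_zero : lowerWythoff 0 = 0 := by simp [lowerWythoff, beattySeq]

theorem lowerWythoff_one : lowerWythoff 1 = 1 := by
  rw [lowerWythoff_eq_iff]
  constructor <;> push_cast <;> linarith [Real.one_lt_goldenRatio, Real.goldenRatio_lt_two]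

theorem lowerWythoff_strictMono : StrictMono lowerWythoff := by
  refine strictMono_int_of_lt_succ fun k => Int.add_one_le_iff.1 (Int.le_floor.2 ?_)
  push_cast
  linarith [lowerWythoff_le k, Real.one_lt_goldenRatio]

theorem lowerWythoff_nonneg {k : ℤ} (hk : 0 ≤ k) : 0 ≤ lowerWythoff k :=
  lowerWythoff_zero ▸ lowerWythoff_strictMono.monotone hk

theorem upperWythoff_nonneg {k : ℤ} (hk : 0 ≤ k) : 0 ≤ upperWythoff k := by
  rw [upperWythoff_eq]
  exact add_nonneg (lowerWythoff_nonneg hk) hk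

theorem lowerWythoff_mul_goldenRatio (k : ℤ) :
    lowerWythoff k * φ = upperWythoff k - (φ - 1) * Int.fract (k * φ) := by
  have ha : (lowerWythoff k : ℝ) = k * φ - Int.fract (k * φ) := (Int.self_sub_fract _).symm
  rw [upperWythoff_eq]
  push_cast
  rw [ha]
  linear_combination (k : ℝ) * Real.goldenRatio_sq

theorem upperWythoff_mul_goldenRatio (k : ℤ) :
    upperWythoff k * φ = lowerWythoff k + upperWythoff k + (2 - φ) * Int.fract (k * φ) := by
  have ha : (lowerWythoff k : ℝ) = k * φ - Int.fract (k * φ) := (Int.self_sub_fract _).symm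
  have hb : (upperWythoff k : ℝ) = lowerWythoff k + k := mod_cast upperWythoff_eq k
  linear_combination lowerWythoff_mul_goldenRatio k + φ * hb - ha

theorem lowerWythoff_lowerWythoff {k : ℤ} (hk : k ≠ 0) :
    lowerWythoff (lowerWythoff k) = upperWythoff k - 1 := by
  have hc : 0 < φ - 1 := sub_pos.2 Real.one_lt_goldenRatio
  have hfract : 0 < Int.fract (k * φ) := sub_pos.2 (lowerWythoff_lt hk)
  have hpos := mul_pos hc hfract
  have hlt := (mul_fract_mem_Ico hc (k * φ)).2
  rw [lowerWythoff_eq_iff, lowerWythoff_mul_goldenRatio]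
  push_cast
  constructor <;> linarith [Real.goldenRatio_lt_two]

theorem lowerWythoff_lowerWythoff_add_one (k : ℤ) :
    lowerWythoff (lowerWythoff k + 1) = upperWythoff k + 1 := by
  obtain ⟨hnonneg, hlt⟩ := mul_fract_mem_Ico (sub_pos.2 Real.one_lt_goldenRatio) (k * φ)
  rw [lowerWythoff_eq_iff]
  push_cast
  rw [add_one_mul, lowerWythoff_mul_goldenRatio]
  constructor <;> linarith [Real.goldenRatio_lt_two]

theorem lowerWythoff_upperWythoff (k : ℤ) :
    lowerWythoff (upperWythoff k) = lowerWythoff k + upperWythoff k := by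
  obtain ⟨hnonneg, hlt⟩ := mul_fract_mem_Ico (sub_pos.2 Real.goldenRatio_lt_two) (k * φ)
  rw [lowerWythoff_eq_iff, upperWythoff_mul_goldenRatio]
  push_cast
  constructor <;> linarith [Real.one_lt_goldenRatio]

theorem lowerWythoff_upperWythoff_add_one (k : ℤ) :
    lowerWythoff (upperWythoff k + 1) = lowerWythoff k + upperWythoff k + 1 := by
  obtain ⟨hnonneg, hlt⟩ := mul_fract_mem_Ico (sub_pos.2 Real.goldenRatio_lt_two) (k * φ)
  rw [lowerWythoff_eq_iff]
  push_cast
  rw [add_one_mul, upperWythoff_mul_goldenRatio]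
  constructor <;> linarith [Real.one_lt_goldenRatio]

theorem holderConjugate_goldenRatio_sq : Real.HolderConjugate φ (φ ^ 2) := by
  refine Real.holderConjugate_iff.2 ⟨Real.one_lt_goldenRatio, ?_⟩
  rw [← inv_pow, Real.inv_goldenRatio, neg_sq, Real.goldenConj_sq, neg_add_cancel_left]

theorem exists_pos_lowerWythoff_eq_iff {n : ℤ} (hn : 0 < n) :
    (∃ k > 0, lowerWythoff k = n) ↔ ¬∃ k > 0, upperWythoff k = n := by
  have h : n ∈ symmDiff {lowerWythoff k | k > 0} {upperWythoff k | k > 0} :=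
    (Real.goldenRatio_irrational.beattySeq_symmDiff_beattySeq_pos
      holderConjugate_goldenRatio_sq).ge hn
  rcases h with ⟨ha, hb⟩ | ⟨hb, ha⟩
  exacts [iff_of_true ha hb, iff_of_false ha (not_not.2 hb)]

theorem exists_nonneg_lowerWythoff_eq_iff {n : ℤ} (hn : 0 ≤ n) :
    (∃ k ≥ 0, lowerWythoff k = n) ↔ ¬∃ k > 0, upperWythoff k = n := by
  rcases hn.eq_or_lt with rfl | hn
  · refine iff_of_true ⟨0, le_rfl, lowerWythoff_zero⟩ ?_
    rintro ⟨k, hk, h⟩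
    have := lowerWythoff_nonneg hk.le
    have := upperWythoff_eq k
    omega
  · rw [← exists_pos_lowerWythoff_eq_iff hn]
    refine exists_congr fun k => and_congr_left ?_
    rintro rfl
    exact ⟨fun hk => hk.lt_of_ne (by rintro rfl; exact hn.ne' lowerWythoff_zero), le_of_lt⟩

theorem lowerWythoff_add_one_eq_iff {m : ℤ} (hm : 0 ≤ m) :
    lowerWythoff (m + 1) = lowerWythoff m + 1 ↔ ∃ k ≥ 0, upperWythoff k = m := by
  constructor
  · intro hgap
    rcases hm.eq_or_lt with rfl | hm
    · exact ⟨0, le_rfl, by simp [upperWythoff_eq, lowerWythoff_zero]⟩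
    by_contra! hno
    obtain ⟨k, hk, rfl⟩ := (exists_pos_lowerWythoff_eq_iff hm).2 fun ⟨k, hk, h⟩ => hno k hk.le h
    have := lowerWythoff_lowerWythoff hk.ne'
    have := lowerWythoff_lowerWythoff_add_one k
    omega
  · rintro ⟨k, -, rfl⟩
    rw [lowerWythoff_upperWythoff_add_one, lowerWythoff_upperWythoff]

theorem exists_lowerWythoff_consecutive_iff {n : ℤ} :
    ((∃ i ≥ 0, lowerWythoff i = n) ∧ ∃ j > 0, lowerWythoff j = n + 1) ↔
      ∃ k ≥ 0, n = lowerWythoff k + upperWythoff k := by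
  constructor
  · rintro ⟨⟨i, hi, rfl⟩, j, -, hj⟩
    have hij : i < j := lowerWythoff_strictMono.lt_iff_lt.1 (by omega)
    have hlt : lowerWythoff i < lowerWythoff (i + 1) := lowerWythoff_strictMono (lt_add_one i)
    have hle : lowerWythoff (i + 1) ≤ lowerWythoff j := lowerWythoff_strictMono.monotone hij
    obtain ⟨k, hk, rfl⟩ := (lowerWythoff_add_one_eq_iff hi).1 (by omega)
    exact ⟨k, hk, lowerWythoff_upperWythoff k⟩
  · rintro ⟨k, hk, rfl⟩
    have hb := upperWythoff_nonneg hk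
    exact ⟨⟨_, hb, lowerWythoff_upperWythoff k⟩,
      _, by omega, lowerWythoff_upperWythoff_add_one k⟩

theorem pos_and_not_exists_upperWythoff_iff {n : ℤ} :
    (0 < n ∧ ¬∃ k > 0, n = upperWythoff k ∨ n = upperWythoff k + 1) ↔
      ∃ k ≥ 0, n = lowerWythoff k + upperWythoff k + 1 := by
  obtain ⟨m, rfl⟩ : ∃ m, n = m + 1 := ⟨n - 1, by omega⟩
  have hsplit : (¬∃ k > 0, m + 1 = upperWythoff k ∨ m + 1 = upperWythoff k + 1) ↔
      (¬∃ k > 0, upperWythoff k = m) ∧ ¬∃ k > 0, upperWythoff k = m + 1 := by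
    grind
  rw [hsplit]
  simp only [add_left_inj, ← exists_lowerWythoff_consecutive_iff]
  constructor
  · rintro ⟨hm, h⟩
    rwa [exists_nonneg_lowerWythoff_eq_iff (by omega), exists_pos_lowerWythoff_eq_iff hm]
  · rintro ⟨⟨i, hi, rfl⟩, h⟩
    have hm := lowerWythoff_nonneg hi
    rw [exists_pos_lowerWythoff_eq_iff (by omega)] at h
    exact ⟨by omega, (exists_nonneg_lowerWythoff_eq_iff hm).1 ⟨i, hi, rfl⟩, h⟩

/-! ### The Fibonacci language -/

theorem Phi_eq_goldenRatio : Phi = φ := rfl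

theorem two_sub_goldenRatio_mem_Icc : 2 - φ ∈ Set.Icc (0 : ℝ) 1 := by
  constructor <;> linarith [Real.one_lt_goldenRatio, Real.goldenRatio_lt_two]

theorem irrational_two_sub_goldenRatio : Irrational (2 - φ) :=
  Real.goldenRatio_irrational.ratCast_sub 2

theorem ceil_mul_two_sub_goldenRatio (k : ℕ) : ⌈k * (2 - φ)⌉ = 2 * k - lowerWythoff k := by
  have h : k * (2 - φ) = -(k * φ) + (2 * k : ℤ) := by push_cast; ring
  rw [h, Int.ceil_add_intCast, Int.ceil_neg, neg_add_eq_sub, lowerWythoff, beattySeq,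
    Int.cast_natCast]

theorem floor_mul_two_sub_goldenRatio {k : ℕ} (hk : k ≠ 0) :
    ⌊k * (2 - φ)⌋ = 2 * k - lowerWythoff k - 1 := by
  have := ceil_natCast_mul_eq_floor_add_one irrational_two_sub_goldenRatio hk
  rw [ceil_mul_two_sub_goldenRatio] at this
  omega

theorem fibWord_eq_lowerMechanical (n : ℕ) : fibWord n = lowerMechanical (2 - φ) (n + 1) := by
  simp [fibWord, lowerMechanical, Phi_eq_goldenRatio, add_assoc, one_add_one_eq_two]

theorem fibWord0_eq_lowerMechanical : fibWord0 = lowerMechanical (2 - φ) := by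
  funext n
  rcases n with _ | n
  · simpa [fibWord0, lowerMechanical, lowerWythoff_one] using
      (floor_mul_two_sub_goldenRatio one_ne_zero).symm
  · exact fibWord_eq_lowerMechanical n

theorem fibWord1_eq_upperMechanical : fibWord1 = upperMechanical (2 - φ) := by
  funext n
  rcases n with _ | n
  · simpa [fibWord1, upperMechanical, lowerWythoff_one] using
      (ceil_mul_two_sub_goldenRatio 1).symm
  · rw [upperMechanical_eq_lowerMechanical irrational_two_sub_goldenRatio n.succ_ne_zero]
    exact fibWord_eq_lowerMechanical n

theorem fibLang_eq_mechanicalLang : fibLang = mechanicalLang (2 - φ) := by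
  rw [fibLang, fibWord0_eq_lowerMechanical, fibWord1_eq_upperMechanical, mechanicalLang]

theorem exists_mem_fibLang_wordVal01_three_two_eq_iff (n : ℕ) :
    (∃ w ∈ fibLang, wordVal01 3 2 w = n) ↔
      ∃ k > 0, (n : ℤ) = upperWythoff k ∨ (n : ℤ) = upperWythoff k + 1 := by
  rw [fibLang_eq_mechanicalLang,
    exists_mem_mechanicalLang_wordVal01_eq_iff two_sub_goldenRatio_mem_Icc]
  have hvalues (L : ℕ) (hL : 0 < L) :
      ((n : ℤ) = (3 : ℕ) * L + ((2 : ℕ) - (3 : ℕ)) * ⌊L * (2 - φ)⌋ ∨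
        (n : ℤ) = (3 : ℕ) * L + ((2 : ℕ) - (3 : ℕ)) * ⌈L * (2 - φ)⌉) ↔
      ((n : ℤ) = upperWythoff L ∨ (n : ℤ) = upperWythoff L + 1) := by
    rw [floor_mul_two_sub_goldenRatio hL.ne', ceil_mul_two_sub_goldenRatio, upperWythoff_eq]
    omega
  constructor
  · rintro ⟨L, hL, h⟩
    exact ⟨L, by exact_mod_cast hL, (hvalues L hL).1 h⟩
  · rintro ⟨k, hk, h⟩
    lift k to ℕ using hk.le
    have hk : 0 < k := by exact_mod_cast hk
    exact ⟨k, hk, (hvalues k hk).2 h⟩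

theorem fib_complement_three_two :
    {n : ℕ | 0 < n ∧ n ∉ {m : ℕ | ∃ w ∈ fibLang, wordVal01 3 2 w = m}} =
      {n : ℕ | ∃ k : ℕ, (n : ℤ) = 2 * ⌊(k : ℝ) * Phi⌋ + k + 1} := by
  ext n
  simp only [Set.mem_ofPred_eq, exists_mem_fibLang_wordVal01_three_two_eq_iff]
  rw [← Int.natCast_pos, pos_and_not_exists_upperWythoff_iff]
  have hvalue (k : ℕ) :
      lowerWythoff k + upperWythoff k + 1 = 2 * ⌊(k : ℝ) * Phi⌋ + k + 1 := by
    rw [upperWythoff_eq, lowerWythoff, beattySeq, Phi_eq_goldenRatio, Int.cast_natCast]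
    ring
  constructor
  · rintro ⟨k, hk, hn⟩
    lift k to ℕ using hk
    exact ⟨k, hn.trans (hvalue k)⟩
  · rintro ⟨k, hn⟩
    exact ⟨k, k.cast_nonneg, hn.trans (hvalue k).symm⟩
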